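/- arXiv:2601.16576 — 5 statements merged into one kernel-verified Lean document; each statement's English description precedes it below -/
import Mathlib

section
/- The objective function f is coercive: for every sequence (X_m) in ℝ^{k×d}, if the Frobenius norms ‖X_m‖_F tend to infinity as m → ∞, then f(X_m) → ∞. -/
open scoped BigOperators

noncomputable section

/-!
The coercivity splits between the two terms of the objective. Since `F` is bounded, its gauge
dominates a multiple of the norm, so the location cost controls the distance from one demand point
to its nearest center. The regularization controls the distance between any two centers, hence from
that nearest center to all the others.
-/

open Bornology Filter

theorem norm_le_mul_gauge {E : Type*} [SeminormedAddCommGroup E] [NormedSpace ℝ E] {F : Set E}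
    {r : ℝ} (hF : Absorbent ℝ F) (hr : 0 < r) (hFr : F ⊆ Metric.closedBall 0 r) (x : E) :
    ‖x‖ ≤ r * gauge F x := by
  rw [← div_le_iff₀' hr, ← gauge_closedBall hr.le]
  exact gauge_mono hF hFr x

theorem le_sum_sum_ite_lt {κ M : Type*} [Fintype κ] [LinearOrder κ] [AddCommMonoid M]
    [PartialOrder M] [IsOrderedAddMonoid M] {g : κ → κ → M} (hg : ∀ s t, 0 ≤ g s t)
    (hsymm : ∀ s t, g s t = g t s) (hdiag : ∀ s, g s s = 0) (s t : κ) :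
    g s t ≤ ∑ u, ∑ v, if u < v then g u v else 0 := by
  have hterm (u v : κ) : 0 ≤ if u < v then g u v else 0 := ite_nonneg (hg u v) le_rfl
  have hrow (u : κ) : 0 ≤ ∑ v, if u < v then g u v else 0 :=
    Finset.sum_nonneg fun v _ => hterm u v
  have hlt {u v : κ} (huv : u < v) : g u v ≤ ∑ u, ∑ v, if u < v then g u v else 0 := calc
    g u v = if u < v then g u v else 0 := (if_pos huv).symm
    _ ≤ ∑ v, if u < v then g u v else 0 :=
      Finset.single_le_sum (f := fun v => if u < v then g u v else 0)
        (fun v _ => hterm u v) (Finset.mem_univ v)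
    _ ≤ ∑ u, ∑ v, if u < v then g u v else 0 :=
      Finset.single_le_sum (f := fun u => ∑ v, if u < v then g u v else 0)
        (fun u _ => hrow u) (Finset.mem_univ u)
  rcases lt_trichotomy s t with hst | rfl | hts
  · exact hlt hst
  · exact (hdiag s).trans_le (Finset.sum_nonneg fun u _ => hrow u)
  · exact (hsymm s t).trans_le (hlt hts)

theorem tendsto_cobounded_of_sqrt_sum_norm_sq {α κ : Type*} [Fintype κ] {E : κ → Type*}
    [∀ ℓ, SeminormedAddCommGroup (E ℓ)] {l : Filter α} {X : α → ∀ ℓ, E ℓ}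
    (hX : Tendsto (fun m => √(∑ ℓ, ‖X m ℓ‖ ^ 2)) l atTop) :
    Tendsto X l (cobounded (∀ ℓ, E ℓ)) := by
  have hL2 : Tendsto (fun m => WithLp.toLp 2 (X m)) l (cobounded (PiLp 2 E)) := by
    simpa only [← tendsto_norm_atTop_iff_cobounded, PiLp.norm_eq_of_L2] using hX
  exact (PiLp.antilipschitzWith_ofLp 2 E).tendsto_cobounded.comp hL2

section Location

variable {ι κ E : Type*} [Fintype ι] [SeminormedAddCommGroup E]

/-- The location cost of the centers `X` for the demand points `a`: each demand point pays its
gauge distance to the nearest center. It is `0` when there are no centers, the infimum of the empty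
family being `0` in `ℝ`. -/
def locationCost [Module ℝ E] (F : Set E) (a : ι → E) (X : κ → E) : ℝ :=
  ∑ i, ⨅ ℓ, gauge F (X ℓ - a i)

/-- The dispersion of the centers `X`: the sum of their squared mutual distances, which is the
Laplace-type regularization term. The order on the index type serves only to count each unordered
pair once. -/
def dispersion [Fintype κ] [LinearOrder κ] (X : κ → E) : ℝ :=
  ∑ s, ∑ t, if s < t then ‖X s - X t‖ ^ 2 else 0

/-- The regularized multifacility location objective, with weight `c` on the dispersion of the
centers; the paper's `f` has `c = λ n / 2`. -/
def locationObjective [Module ℝ E] [Fintype κ] [LinearOrder κ] (F : Set E) (a : ι → E) (c : ℝ)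
    (X : κ → E) : ℝ :=
  locationCost F a X + c * dispersion X

theorem locationCost_nonneg [Module ℝ E] (F : Set E) (a : ι → E) (X : κ → E) :
    0 ≤ locationCost F a X :=
  Finset.sum_nonneg fun _ _ => Real.iInf_nonneg fun _ => gauge_nonneg _

theorem exists_gauge_sub_le_locationCost [Module ℝ E] [Finite κ] [Nonempty κ] (F : Set E)
    (a : ι → E) (X : κ → E) (i : ι) : ∃ ℓ, gauge F (X ℓ - a i) ≤ locationCost F a X := by
  obtain ⟨ℓ, hℓ⟩ := exists_eq_ciInf_of_finite (f := fun ℓ => gauge F (X ℓ - a i))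
  exact ⟨ℓ, hℓ.trans_le <| Finset.single_le_sum (f := fun i => ⨅ ℓ, gauge F (X ℓ - a i))
    (fun _ _ => Real.iInf_nonneg fun _ => gauge_nonneg _) (Finset.mem_univ i)⟩

variable [Fintype κ] [LinearOrder κ]

theorem dispersion_nonneg (X : κ → E) : 0 ≤ dispersion X :=
  Finset.sum_nonneg fun _ _ => Finset.sum_nonneg fun _ _ => ite_nonneg (sq_nonneg _) le_rfl

theorem norm_sub_sq_le_dispersion (X : κ → E) (s t : κ) : ‖X s - X t‖ ^ 2 ≤ dispersion X :=
  le_sum_sum_ite_lt (g := fun s t => ‖X s - X t‖ ^ 2) (fun _ _ => sq_nonneg _)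
    (fun s t => by rw [norm_sub_rev]) (fun s => by simp) s t

variable [NormedSpace ℝ E] {F : Set E} {r c : ℝ}

theorem norm_le_locationCost_add_dispersion (hF : Absorbent ℝ F) (hr : 0 < r)
    (hFr : F ⊆ Metric.closedBall 0 r) (a : ι → E) (i : ι) (X : κ → E) :
    ‖X‖ ≤ r * locationCost F a X + dispersion X + (1 + ‖a i‖) := by
  have hcost := locationCost_nonneg F a X
  have hdisp := dispersion_nonneg X
  refine (pi_norm_le_iff_of_nonneg (by positivity)).2 fun ℓ => ?_
  have : Nonempty κ := ⟨ℓ⟩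
  obtain ⟨ℓ₀, hℓ₀⟩ := exists_gauge_sub_le_locationCost F a X i
  have hcenters : ‖X ℓ - X ℓ₀‖ ≤ dispersion X + 1 := by
    nlinarith [norm_sub_sq_le_dispersion X ℓ ℓ₀, sq_nonneg (‖X ℓ - X ℓ₀‖ - 1)]
  have hnearest : ‖X ℓ₀ - a i‖ ≤ r * locationCost F a X :=
    (norm_le_mul_gauge hF hr hFr _).trans (by gcongr)
  calc ‖X ℓ‖ = ‖(X ℓ - X ℓ₀) + (X ℓ₀ - a i) + a i‖ := by simp
    _ ≤ ‖X ℓ - X ℓ₀‖ + ‖X ℓ₀ - a i‖ + ‖a i‖ := norm_add₃_le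
    _ ≤ (dispersion X + 1) + r * locationCost F a X + ‖a i‖ := by gcongr
    _ = r * locationCost F a X + dispersion X + (1 + ‖a i‖) := by ring

theorem norm_le_locationObjective (hF : Absorbent ℝ F) (hr : 0 < r)
    (hFr : F ⊆ Metric.closedBall 0 r) (hc : 0 < c) (a : ι → E) (i : ι) (X : κ → E) :
    ‖X‖ ≤ (r + c⁻¹) * locationObjective F a c X + (1 + ‖a i‖) := by
  have hcost : locationCost F a X ≤ locationObjective F a c X :=
    le_add_of_nonneg_right (mul_nonneg hc.le (dispersion_nonneg X))
  have hdisp : dispersion X ≤ c⁻¹ * locationObjective F a c X :=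
    (le_inv_mul_iff₀ hc).2 (le_add_of_nonneg_left (locationCost_nonneg F a X))
  calc ‖X‖ ≤ r * locationCost F a X + dispersion X + (1 + ‖a i‖) :=
        norm_le_locationCost_add_dispersion hF hr hFr a i X
    _ ≤ r * locationObjective F a c X + c⁻¹ * locationObjective F a c X + (1 + ‖a i‖) := by gcongr
    _ = (r + c⁻¹) * locationObjective F a c X + (1 + ‖a i‖) := by ring

theorem objective_coercive_general [Nonempty ι] (hF : Absorbent ℝ F) (hFb : IsBounded F)
    (a : ι → E) (hc : 0 < c) :
    Tendsto (locationObjective F a c) (cobounded (κ → E)) atTop := by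
  obtain ⟨r, hr, hFr⟩ := hFb.subset_closedBall_lt 0 0
  obtain ⟨i⟩ := ‹Nonempty ι›
  have hpos : 0 < r + c⁻¹ := by positivity
  have hmajorant : Tendsto
      (fun X : κ → E => (r + c⁻¹) * locationObjective F a c X + (1 + ‖a i‖))
      (cobounded (κ → E)) atTop :=
    tendsto_atTop_mono (norm_le_locationObjective hF hr hFr hc a i) tendsto_norm_cobounded_atTop
  exact (tendsto_const_mul_atTop_of_pos hpos).1
    (hmajorant.atTop_of_add_const _)

end Location

/-- The objective function `f` of the gauge multifacility location model with
Laplace-type regularization is coercive: if the Frobenius norms `‖X_m‖_F → ∞`, then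
`f(X_m) → ∞`. -/
theorem objective_coercive
    (d n k : ℕ) (hn : 0 < n) (hk : 0 < k)
    (F : Set (EuclideanSpace ℝ (Fin d)))
    (hFcomp : IsCompact F) (hFconv : Convex ℝ F)
    (hF0 : (0 : EuclideanSpace ℝ (Fin d)) ∈ interior F)
    (a : Fin n → EuclideanSpace ℝ (Fin d)) (ha : Function.Injective a)
    (lam : ℝ) (hlam : 0 < lam)
    (f : (Fin k → EuclideanSpace ℝ (Fin d)) → ℝ)
    (hf : ∀ X : Fin k → EuclideanSpace ℝ (Fin d),
      f X = (∑ i : Fin n, ⨅ ℓ : Fin k, gauge F (X ℓ - a i))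
        + lam * n / 2 * ∑ s : Fin k, ∑ t : Fin k, (if s < t then ‖X s - X t‖ ^ 2 else 0))
    (X : ℕ → (Fin k → EuclideanSpace ℝ (Fin d)))
    (hX : Filter.Tendsto (fun m => Real.sqrt (∑ ℓ : Fin k, ‖X m ℓ‖ ^ 2))
      Filter.atTop Filter.atTop) :
    Filter.Tendsto (fun m => f (X m)) Filter.atTop Filter.atTop := by
  obtain rfl : f = locationObjective F a (lam * n / 2) := funext hf
  have : Nonempty (Fin n) := ⟨⟨0, hn⟩⟩
  exact (objective_coercive_general (absorbent_nhds_zero (mem_interior_iff_mem_nhds.1 hF0))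
    hFcomp.isBounded a (by positivity)).comp (tendsto_cobounded_of_sqrt_sum_norm_sq hX)
end
end

section
/- Let X̄ = (x̄_1,…,x̄_k) ∈ ℝ^{k×d} be such that L_i(X̄) is a singleton for every i = 1,…,n. Then there exists ε > 0 such that for every X = (x_1,…,x_k) ∈ ℝ^{k×d} with ‖x_ℓ − x̄_ℓ‖ < ε for all ℓ = 1,…,k, one has I_ℓ(X) = I_ℓ(X̄) for all ℓ = 1,…,k, where I_ℓ(X) = {i ∈ {1,…,n} : ℓ ∈ L_i(X)}. -/
open scoped BigOperators

noncomputable section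

/-!
That `ℓ` is the only minimizer of a finite family of reals is a finite conjunction of strict
inequalities. When the members of the family depend continuously on a parameter, each of these
inequalities persists near the given parameter, and hence so does the set of minimizers.
-/

open Filter Topology

section Argmin

variable {κ α : Type*}

/-- The set of indices at which a family attains its minimum; it is empty if there is no minimum.
The set `L_i(X)` is the case of the family `ℓ ↦ ρ(x_ℓ - a_i)`. -/
def argminSet [LE α] (f : κ → α) : Set κ := {i | ∀ j, f i ≤ f j}

theorem argminSet_eq_setOf_eq_ciInf [Finite κ] [ConditionallyCompleteLattice α] (f : κ → α) :
    argminSet f = {i | f i = ⨅ j, f j} := by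
  ext i
  have : Nonempty κ := ⟨i⟩
  have hbdd : BddBelow (Set.range f) := (Set.finite_range f).bddBelow
  exact ⟨fun hi ↦ le_antisymm (le_ciInf hi) (ciInf_le hbdd i),
    fun hi j ↦ hi.trans_le (ciInf_le hbdd j)⟩

theorem argminSet_eq_singleton_iff [LinearOrder α] {f : κ → α} {i : κ} :
    argminSet f = {i} ↔ ∀ j, j ≠ i → f i < f j := by
  constructor
  · intro h j hj
    have hi : i ∈ argminSet f := h ▸ Set.mem_singleton i
    by_contra! hji
    have hj_mem : j ∈ argminSet f := fun r ↦ hji.trans (hi r)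
    rw [h] at hj_mem
    exact hj hj_mem
  · intro h
    refine Set.eq_singleton_iff_unique_mem.2 ⟨fun j ↦ ?_, fun j hj ↦ ?_⟩
    · rcases eq_or_ne j i with rfl | hji
      exacts [le_rfl, (h j hji).le]
    · by_contra hji
      exact (h j hji).not_ge (hj i)

theorem eventually_argminSet_eq_singleton {β : Type*} [Finite κ] [LinearOrder α]
    [TopologicalSpace α] [OrderClosedTopology α] {l : Filter β} {f : κ → β → α} {g : κ → α}
    {i : κ} (hf : ∀ j, Tendsto (f j) l (𝓝 (g j))) (hg : argminSet g = {i}) :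
    ∀ᶠ x in l, argminSet (fun j ↦ f j x) = {i} := by
  simp only [argminSet_eq_singleton_iff, eventually_all] at hg ⊢
  exact fun j hji ↦ (hf i).eventually_lt (hf j) (hg j hji)

end Argmin

section Cluster

variable {ι κ E α : Type*}

/-- The cluster `I_ℓ(X)` of the centre `X ℓ`: the indices `i` for which no other centre is cheaper
than `X ℓ`, where `c i x` is the cost of assigning `i` to a centre at `x`. Clusters overlap when
there are ties. In the paper, `c i x = ρ(x - a_i)`. -/
def cluster [LE α] (c : ι → E → α) (X : κ → E) (ℓ : κ) : Set ι :=
  {i | ℓ ∈ argminSet fun r ↦ c i (X r)}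

variable [Finite ι] [Finite κ] [LinearOrder α] [TopologicalSpace α] [OrderClosedTopology α]
  {c : ι → E → α} {X₀ : κ → E}

theorem eventually_cluster_eq [TopologicalSpace E] (hc : ∀ i ℓ, ContinuousAt (c i) (X₀ ℓ))
    (hunique : ∀ i, ∃ ℓ, argminSet (fun r ↦ c i (X₀ r)) = {ℓ}) :
    ∀ᶠ X in 𝓝 X₀, cluster c X = cluster c X₀ := by
  have hargmin : ∀ᶠ X in 𝓝 X₀, ∀ i,
      argminSet (fun r ↦ c i (X r)) = argminSet (fun r ↦ c i (X₀ r)) := by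
    refine eventually_all.2 fun i ↦ ?_
    obtain ⟨ℓ, hℓ⟩ := hunique i
    rw [hℓ]
    exact eventually_argminSet_eq_singleton
      (fun r ↦ (hc i r).tendsto.comp (continuousAt_apply r X₀)) hℓ
  filter_upwards [hargmin] with X hX
  simp only [funext_iff, cluster, hX, implies_true]

theorem cluster_index_sets_locally_stable_general [PseudoMetricSpace E]
    (hc : ∀ i ℓ, ContinuousAt (c i) (X₀ ℓ))
    (hunique : ∀ i, ∃ ℓ, argminSet (fun r ↦ c i (X₀ r)) = {ℓ}) :
    ∃ ε > (0 : ℝ), ∀ X : κ → E, (∀ ℓ, dist (X ℓ) (X₀ ℓ) < ε) →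
      ∀ ℓ, cluster c X ℓ = cluster c X₀ ℓ := by
  have := Fintype.ofFinite κ
  obtain ⟨ε, hε, hball⟩ := Metric.eventually_nhds_iff.1 (eventually_cluster_eq hc hunique)
  exact ⟨ε, hε, fun X hX ↦ congrFun (hball ((dist_pi_lt_iff hε).2 hX))⟩

end Cluster

/-- If every set `L_i(X̄)` is a singleton, then the clusters
`I_ℓ(X) = {i | ℓ ∈ L_i(X)}` are locally stable: there is `ε > 0` such that
`I_ℓ(X) = I_ℓ(X̄)` for all `ℓ` whenever `‖x_ℓ − x̄_ℓ‖ < ε` for all `ℓ`. -/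
theorem cluster_index_sets_locally_stable
    (d n k : ℕ) (hn : 0 < n) (hk : 0 < k)
    (F : Set (EuclideanSpace ℝ (Fin d)))
    (hFcomp : IsCompact F) (hFconv : Convex ℝ F)
    (hF0 : (0 : EuclideanSpace ℝ (Fin d)) ∈ interior F)
    (a : Fin n → EuclideanSpace ℝ (Fin d)) (ha : Function.Injective a)
    (L : (Fin k → EuclideanSpace ℝ (Fin d)) → Fin n → Set (Fin k))
    (hL : ∀ X i, L X i =
      {ℓ : Fin k | gauge F (X ℓ - a i) = ⨅ r : Fin k, gauge F (X r - a i)})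
    (I : (Fin k → EuclideanSpace ℝ (Fin d)) → Fin k → Set (Fin n))
    (hI : ∀ X ℓ, I X ℓ = {i : Fin n | ℓ ∈ L X i})
    (Xb : Fin k → EuclideanSpace ℝ (Fin d))
    (hsing : ∀ i : Fin n, ∃ ℓ : Fin k, L Xb i = {ℓ}) :
    ∃ ε > (0 : ℝ), ∀ X : Fin k → EuclideanSpace ℝ (Fin d),
      (∀ ℓ : Fin k, ‖X ℓ - Xb ℓ‖ < ε) → ∀ ℓ : Fin k, I X ℓ = I Xb ℓ := by
  have hgauge : Continuous (gauge F) := continuous_gauge hFconv (mem_interior_iff_mem_nhds.1 hF0)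
  simp only [hI, hL, ← argminSet_eq_setOf_eq_ciInf, ← dist_eq_norm] at hsing ⊢
  exact cluster_index_sets_locally_stable_general (c := fun i x ↦ gauge F (x - a i))
    (fun i ℓ ↦ (hgauge.comp (continuous_sub_right (a i))).continuousAt) hsing
end
end

section
/- Let X̄ = (x̄_1,…,x̄_k) ∈ ℝ^{k×d} be such that L_i(X̄) is a singleton for every i = 1,…,n. If X̄ is a local minimizer of f, then for each ℓ ∈ {1,…,k}, the point x̄_ℓ is a global minimizer over ℝ^d of the convex function φ_ℓ(x) = Σ_{i∈I_ℓ(X̄)} ρ(x − a_i) + (λn/2) Σ_{j=1, j≠ℓ}^k ‖x − x̄_j‖², where I_ℓ(X̄) = {i ∈ {1,…,n} : ℓ ∈ L_i(X̄)}. -/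
open scoped BigOperators
open scoped Classical

noncomputable section

/-!
Fix `ℓ` and move only the center `x̄_ℓ` to `x`. The change of `f` is at most `φ_ℓ(x) - φ_ℓ(x̄_ℓ)`:
the pairwise terms change by exactly the same amount, a site `a_i` with `ℓ ∈ L_i(X̄)` can still
be served by `x`, and every other site has a nearest center that did not move. Hence a local
minimizer `X̄` of `f` yields a local minimizer `x̄_ℓ` of `φ_ℓ`, global because `φ_ℓ` is convex.
-/

theorem convexOn_finset_sum {𝕜 E β ι : Type*} [Semiring 𝕜] [PartialOrder 𝕜] [AddCommMonoid E]
    [SMul 𝕜 E] [AddCommMonoid β] [PartialOrder β] [IsOrderedAddMonoid β] [Module 𝕜 β] {s : Set E}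
    (hs : Convex 𝕜 s) (t : Finset ι) {g : ι → E → β} (hg : ∀ i ∈ t, ConvexOn 𝕜 s (g i)) :
    ConvexOn 𝕜 s fun x ↦ ∑ i ∈ t, g i x := by
  rw [← Finset.sum_fn]
  exact Finset.sum_induction g (ConvexOn 𝕜 s) (fun _ _ ↦ ConvexOn.add)
    (convexOn_const 0 hs) hg

theorem convexOn_univ_gauge {E : Type*} [AddCommGroup E] [Module ℝ E] {F : Set E}
    (hF : Convex ℝ F) (hF_abs : Absorbent ℝ F) : ConvexOn ℝ Set.univ (gauge F) := by
  refine ⟨convex_univ, fun x _ y _ p q hp hq _ ↦ ?_⟩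
  calc gauge F (p • x + q • y) ≤ gauge F (p • x) + gauge F (q • y) := gauge_add_le hF hF_abs _ _
    _ = p • gauge F x + q • gauge F y := by
      rw [gauge_smul_of_nonneg hp, gauge_smul_of_nonneg hq]

theorem convexOn_univ_gauge_sub {E : Type*} [AddCommGroup E] [Module ℝ E] {F : Set E}
    (hF : Convex ℝ F) (hF_abs : Absorbent ℝ F) (b : E) :
    ConvexOn ℝ Set.univ fun x ↦ gauge F (x - b) := by
  simpa only [Set.preimage_univ, Function.comp_def, ← sub_eq_add_neg] using
    (convexOn_univ_gauge hF hF_abs).translate_left (-b)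

theorem convexOn_univ_norm_sub_sq {E : Type*} [SeminormedAddCommGroup E] [NormedSpace ℝ E] (b : E) :
    ConvexOn ℝ Set.univ fun x ↦ ‖x - b‖ ^ 2 := by
  simp only [← dist_eq_norm]
  exact (convexOn_univ_dist b).pow (fun _ _ ↦ dist_nonneg) 2

theorem isLocalMin_pi_iff_exists_norm_sub_lt {κ E β : Type*} [Finite κ] [SeminormedAddCommGroup E]
    [Preorder β] {f : (κ → E) → β} {X : κ → E} :
    IsLocalMin f X ↔ ∃ ε > 0, ∀ Y : κ → E, (∀ ℓ, ‖Y ℓ - X ℓ‖ < ε) → f X ≤ f Y := by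
  have := Fintype.ofFinite κ
  refine Metric.eventually_nhds_iff.trans (exists_congr fun ε ↦ and_congr_right fun hε ↦ ?_)
  simp only [dist_pi_lt_iff hε]
  simp only [dist_eq_norm]

/-- The set `L_i(X)` of indices of the centers serving site `i` at least cost. -/
def nearestCenters {ι κ α : Type*} (g : ι → α → ℝ) (X : κ → α) (i : ι) : Set κ :=
  {ℓ | g i (X ℓ) = ⨅ r, g i (X r)}

section MovingOneCenter

variable {κ α : Type*} [DecidableEq κ]

theorem iInf_comp_update_le {β : Type*} [ConditionallyCompleteLinearOrder β] [Finite κ]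
    (h : α → β) (X : κ → α) (ℓ : κ) (x : α) : ⨅ r, h (Function.update X ℓ x r) ≤ h x := by
  simpa only [Function.update_self] using
    ciInf_le (Set.finite_range fun r ↦ h (Function.update X ℓ x r)).bddBelow ℓ

theorem iInf_comp_update_le_iInf_of_ne {β : Type*} [ConditionallyCompleteLinearOrder β] [Finite κ]
    {h : α → β} {X : κ → α} {ℓ : κ} (hℓ : h (X ℓ) ≠ ⨅ r, h (X r)) (x : α) :
    ⨅ r, h (Function.update X ℓ x r) ≤ ⨅ r, h (X r) := by
  have : Nonempty κ := ⟨ℓ⟩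
  obtain ⟨m, hm⟩ := exists_eq_ciInf_of_finite (f := fun r ↦ h (X r))
  have hmℓ : m ≠ ℓ := by
    rintro rfl
    exact hℓ hm
  calc ⨅ r, h (Function.update X ℓ x r) ≤ h (Function.update X ℓ x m) :=
        ciInf_le (Set.finite_range fun r ↦ h (Function.update X ℓ x r)).bddBelow m
    _ = ⨅ r, h (X r) := by rw [Function.update_of_ne hmℓ, hm]

theorem sum_iInf_update_sub_le {ι : Type*} [Fintype ι] [Finite κ] (g : ι → α → ℝ)
    (X : κ → α) (ℓ : κ) (x : α) :
    (∑ i, ⨅ r, g i (Function.update X ℓ x r)) - ∑ i, ⨅ r, g i (X r)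
      ≤ ∑ i with ℓ ∈ nearestCenters g X i, g i x
        - ∑ i with ℓ ∈ nearestCenters g X i, g i (X ℓ) := by
  rw [← Finset.sum_sub_distrib, ← Finset.sum_sub_distrib, Finset.sum_filter]
  refine Finset.sum_le_sum fun i _ ↦ ?_
  split_ifs with hi
  · rw [show g i (X ℓ) = ⨅ r, g i (X r) from hi]
    exact sub_le_sub_right (iInf_comp_update_le (g i) X ℓ x) _
  · exact sub_nonpos.2 (iInf_comp_update_le_iInf_of_ne hi x)

end MovingOneCenter

theorem sum_sum_ite_lt_eq_sum_erase_add {κ M : Type*} [Fintype κ] [LinearOrder κ] [AddCommMonoid M]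
    {w : κ → κ → M} (hw : ∀ s t, w s t = w t s) (ℓ : κ) :
    ∑ s, ∑ t, (if s < t then w s t else 0)
      = ∑ s ∈ Finset.univ.erase ℓ, ∑ t ∈ Finset.univ.erase ℓ, (if s < t then w s t else 0)
        + ∑ j ∈ Finset.univ.erase ℓ, w ℓ j := by
  have sum_eq (h : κ → M) : ∑ s, h s = h ℓ + ∑ s ∈ Finset.univ.erase ℓ, h s :=
    (Finset.add_sum_erase _ h (Finset.mem_univ ℓ)).symm
  have pairs_through_ℓ : ∑ j ∈ Finset.univ.erase ℓ, w ℓ j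
      = ∑ t ∈ Finset.univ.erase ℓ, (if ℓ < t then w ℓ t else 0)
        + ∑ s ∈ Finset.univ.erase ℓ, (if s < ℓ then w s ℓ else 0) := by
    rw [← Finset.sum_add_distrib]
    refine Finset.sum_congr rfl fun j hj ↦ ?_
    rcases lt_or_gt_of_ne (Finset.ne_of_mem_erase hj) with h | h
    · simp only [h, h.not_gt, if_true, if_false, zero_add, hw ℓ j]
    · simp only [h, h.not_gt, if_true, if_false, add_zero]
  rw [sum_eq, pairs_through_ℓ]
  simp only [sum_eq fun t ↦ if _ < t then w _ t else 0, lt_self_iff_false, if_false, zero_add,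
    Finset.sum_add_distrib]
  abel

section ClusterCost

variable {ι κ E : Type*} [Fintype ι] [Fintype κ] [LinearOrder κ] [SeminormedAddCommGroup E]

/-- The sum of squared distances over unordered pairs of distinct centers, each pair being counted
once through the order on the index type. -/
def centerDispersion (X : κ → E) : ℝ :=
  ∑ s, ∑ t, if s < t then ‖X s - X t‖ ^ 2 else 0

/-- The clustering objective `f` for a family of centers `X`, where `g i x` is the cost of serving
site `i` from `x` (in the paper `ρ (x - a i)`) and `c` is the weight of the regularization term
(in the paper `λ n / 2`). -/
def clusterCost (g : ι → E → ℝ) (c : ℝ) (X : κ → E) : ℝ :=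
  (∑ i, ⨅ ℓ, g i (X ℓ)) + c * centerDispersion X

/-- The objective `φ_ℓ` of the single center `ℓ`, with the other centers and the set of sites it
serves held fixed as they are at `X`. -/
def centerCost (g : ι → E → ℝ) (c : ℝ) (X : κ → E) (ℓ : κ) (x : E) : ℝ :=
  (∑ i with ℓ ∈ nearestCenters g X i, g i x) + c * ∑ j ∈ Finset.univ.erase ℓ, ‖x - X j‖ ^ 2

theorem centerDispersion_update_sub (X : κ → E) (ℓ : κ) (x : E) :
    centerDispersion (Function.update X ℓ x) - centerDispersion X
      = ∑ j ∈ Finset.univ.erase ℓ, ‖x - X j‖ ^ 2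
        - ∑ j ∈ Finset.univ.erase ℓ, ‖X ℓ - X j‖ ^ 2 := by
  have split (Y : κ → E) := sum_sum_ite_lt_eq_sum_erase_add
    (w := fun s t ↦ ‖Y s - Y t‖ ^ 2) (fun s t ↦ by rw [norm_sub_rev]) ℓ
  have update_eq {j : κ} (hj : j ∈ Finset.univ.erase ℓ) : Function.update X ℓ x j = X j :=
    Function.update_of_ne (Finset.ne_of_mem_erase hj) x X
  have pairs_off_ℓ : ∑ s ∈ Finset.univ.erase ℓ, ∑ t ∈ Finset.univ.erase ℓ,
        (if s < t then ‖Function.update X ℓ x s - Function.update X ℓ x t‖ ^ 2 else 0)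
      = ∑ s ∈ Finset.univ.erase ℓ, ∑ t ∈ Finset.univ.erase ℓ,
        (if s < t then ‖X s - X t‖ ^ 2 else 0) :=
    Finset.sum_congr rfl fun s hs ↦ Finset.sum_congr rfl fun t ht ↦ by
      rw [update_eq hs, update_eq ht]
  have pairs_through_ℓ : ∑ j ∈ Finset.univ.erase ℓ,
        ‖Function.update X ℓ x ℓ - Function.update X ℓ x j‖ ^ 2
      = ∑ j ∈ Finset.univ.erase ℓ, ‖x - X j‖ ^ 2 :=
    Finset.sum_congr rfl fun j hj ↦ by rw [update_eq hj, Function.update_self]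
  rw [centerDispersion, centerDispersion, split, split, pairs_off_ℓ, pairs_through_ℓ,
    add_sub_add_left_eq_sub]

theorem clusterCost_update_sub_le (g : ι → E → ℝ) (c : ℝ) (X : κ → E) (ℓ : κ) (x : E) :
    clusterCost g c (Function.update X ℓ x) - clusterCost g c X
      ≤ centerCost g c X ℓ x - centerCost g c X ℓ (X ℓ) := by
  rw [clusterCost, clusterCost, centerCost, centerCost, add_sub_add_comm, add_sub_add_comm,
    ← mul_sub, ← mul_sub, centerDispersion_update_sub]
  exact add_le_add_left (sum_iInf_update_sub_le g X ℓ x) _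

theorem isLocalMin_centerCost {g : ι → E → ℝ} {c : ℝ} {X : κ → E}
    (hX : IsLocalMin (clusterCost g c) X) (ℓ : κ) : IsLocalMin (centerCost g c X ℓ) (X ℓ) := by
  have tendsto_update : Filter.Tendsto (Function.update X ℓ) (nhds (X ℓ)) (nhds X) := by
    simpa only [Function.update_eq_self] using
      (continuous_const.update ℓ continuous_id : Continuous (Function.update X ℓ)).tendsto (X ℓ)
  filter_upwards [tendsto_update.eventually hX] with x hx
  exact sub_nonneg.1 ((sub_nonneg.2 hx).trans (clusterCost_update_sub_le g c X ℓ x))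

theorem convexOn_univ_centerCost [NormedSpace ℝ E] {g : ι → E → ℝ}
    (hg : ∀ i, ConvexOn ℝ Set.univ (g i)) {c : ℝ} (hc : 0 ≤ c) (X : κ → E) (ℓ : κ) :
    ConvexOn ℝ Set.univ (centerCost g c X ℓ) :=
  (convexOn_finset_sum convex_univ _ fun i _ ↦ hg i).add
    ((convexOn_finset_sum convex_univ _ fun j _ ↦ convexOn_univ_norm_sub_sq (X j)).smul hc)

theorem local_min_implies_row_global_min_general [NormedSpace ℝ E] {g : ι → E → ℝ}
    (hg : ∀ i, ConvexOn ℝ Set.univ (g i)) {c : ℝ} (hc : 0 ≤ c) {X : κ → E}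
    (hX : IsLocalMin (clusterCost g c) X) (ℓ : κ) (x : E) :
    centerCost g c X ℓ (X ℓ) ≤ centerCost g c X ℓ x :=
  IsMinOn.of_isLocalMin_of_convex_univ (isLocalMin_centerCost hX ℓ)
    (convexOn_univ_centerCost hg hc X ℓ) x

end ClusterCost

/-- If each `L_i(X̄)` is a singleton and `X̄` is a local minimizer of `f`,
then each `x̄_ℓ` is a global minimizer over `ℝ^d` of
`φ_ℓ(x) = Σ_{i ∈ I_ℓ(X̄)} ρ(x − a_i) + (λn/2) Σ_{j ≠ ℓ} ‖x − x̄_j‖²`. -/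
theorem local_min_implies_row_global_min
    (d n k : ℕ) (hn : 0 < n) (hk : 0 < k)
    (F : Set (EuclideanSpace ℝ (Fin d)))
    (hFcomp : IsCompact F) (hFconv : Convex ℝ F)
    (hF0 : (0 : EuclideanSpace ℝ (Fin d)) ∈ interior F)
    (a : Fin n → EuclideanSpace ℝ (Fin d)) (ha : Function.Injective a)
    (lam : ℝ) (hlam : 0 < lam)
    (f : (Fin k → EuclideanSpace ℝ (Fin d)) → ℝ)
    (hf : ∀ X : Fin k → EuclideanSpace ℝ (Fin d),
      f X = (∑ i : Fin n, ⨅ ℓ : Fin k, gauge F (X ℓ - a i))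
        + lam * n / 2 * ∑ s : Fin k, ∑ t : Fin k, (if s < t then ‖X s - X t‖ ^ 2 else 0))
    (L : (Fin k → EuclideanSpace ℝ (Fin d)) → Fin n → Set (Fin k))
    (hL : ∀ X i, L X i =
      {ℓ : Fin k | gauge F (X ℓ - a i) = ⨅ r : Fin k, gauge F (X r - a i)})
    (Xb : Fin k → EuclideanSpace ℝ (Fin d))
    (hsing : ∀ i : Fin n, ∃ ℓ : Fin k, L Xb i = {ℓ})
    (hlocal : ∃ ε > (0 : ℝ), ∀ X : Fin k → EuclideanSpace ℝ (Fin d),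
      (∀ ℓ : Fin k, ‖X ℓ - Xb ℓ‖ < ε) → f Xb ≤ f X)
    (phi : Fin k → EuclideanSpace ℝ (Fin d) → ℝ)
    (hphi : ∀ (ℓ : Fin k) (x : EuclideanSpace ℝ (Fin d)),
      phi ℓ x = (∑ i ∈ Finset.univ.filter (fun i : Fin n => ℓ ∈ L Xb i), gauge F (x - a i))
        + lam * n / 2 * ∑ j ∈ Finset.univ.erase ℓ, ‖x - Xb j‖ ^ 2) :
    ∀ (ℓ : Fin k) (x : EuclideanSpace ℝ (Fin d)), phi ℓ (Xb ℓ) ≤ phi ℓ x := by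
  have hF_abs : Absorbent ℝ F := absorbent_nhds_zero (mem_interior_iff_mem_nhds.1 hF0)
  obtain rfl : f = clusterCost (fun i x ↦ gauge F (x - a i)) (lam * n / 2) := funext hf
  obtain rfl : L = nearestCenters (fun i x ↦ gauge F (x - a i)) := funext₂ hL
  obtain rfl : phi = centerCost (fun i x ↦ gauge F (x - a i)) (lam * n / 2) Xb := funext₂ hphi
  exact local_min_implies_row_global_min_general
    (fun i ↦ convexOn_univ_gauge_sub hFconv hF_abs (a i)) (by positivity)
    (isLocalMin_pi_iff_exists_norm_sub_lt.2 hlocal)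
end
end

section
/- The gradient of g_μ is Lipschitz continuous on ℝ^{k×d} with constant n/μ + λnk: for all X, X' ∈ ℝ^{k×d}, ‖∇g_μ(X') − ∇g_μ(X)‖_F ≤ (n/μ + λnk) ‖X' − X‖_F. -/
open scoped BigOperators RealInnerProductSpace

noncomputable section

/-!
Writing `(L X)_s = ∑ t, (X_s - X_t)`, the pairwise penalty `∑_{s < t} ‖X_s - X_t‖²` is the quadratic
form `⟪L X, X⟫`, so `∇g_μ` is affine with linear part `(n / μ) • 1 + (λ n) • L`, and everything
reduces to `‖L‖ ≤ k`. Since the entries of `L X` sum to zero, `L² = k L`; as `L` is symmetric,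
`‖L X‖² = ⟪L² X, X⟫ = k ⟪L X, X⟫ ≤ k ‖L X‖ ‖X‖`.
-/

theorem sum_sum_eq_two_nsmul_sum_sum_lt {κ M : Type*} [Fintype κ] [LinearOrder κ]
    [AddCommMonoid M] {f : κ → κ → M} (hdiag : ∀ s, f s s = 0) (hsymm : ∀ s t, f s t = f t s) :
    ∑ s, ∑ t, f s t = 2 • ∑ s, ∑ t, if s < t then f s t else 0 := by
  have hsplit (s t : κ) :
      f s t = (if s < t then f s t else 0) + if t < s then f t s else 0 := by
    rcases lt_trichotomy s t with h | rfl | h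
    · simp [h, h.not_gt]
    · simp [hdiag]
    · simp [h, h.not_gt, hsymm s t]
  calc ∑ s, ∑ t, f s t
      = ∑ s, ∑ t, (if s < t then f s t else 0) + ∑ s, ∑ t, if t < s then f t s else 0 := by
        simp only [← Finset.sum_add_distrib, ← hsplit]
    _ = 2 • ∑ s, ∑ t, if s < t then f s t else 0 := by
        rw [two_nsmul, Finset.sum_comm (f := fun s t => if t < s then f t s else 0)]

theorem norm_le_of_isSymmetric_of_comp_self_eq_smul {F : Type*} [NormedAddCommGroup F]
    [InnerProductSpace ℝ F] {T : F →L[ℝ] F} (hT : (T : F →ₗ[ℝ] F).IsSymmetric) {c : ℝ}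
    (hc : 0 ≤ c) (hsq : T ∘L T = c • T) : ‖T‖ ≤ c := by
  refine T.opNorm_le_bound hc fun x => ?_
  have hmul : ‖T x‖ * ‖T x‖ ≤ c * ‖x‖ * ‖T x‖ :=
    calc ‖T x‖ * ‖T x‖
        = ⟪T (T x), x⟫ := by rw [← real_inner_self_eq_norm_mul_norm]; exact (hT (T x) x).symm
      _ = c * ⟪T x, x⟫ := by
          rw [← ContinuousLinearMap.comp_apply, hsq, smul_apply, real_inner_smul_left]
      _ ≤ c * (‖T x‖ * ‖x‖) := by gcongr; exact real_inner_le_norm _ _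
      _ = c * ‖x‖ * ‖T x‖ := by ring
  rcases (norm_nonneg (T x)).eq_or_lt with h0 | hpos
  · rw [← h0]; positivity
  · exact le_of_mul_le_mul_right hmul hpos

section QuadraticObjective

variable {ι F : Type*} [Fintype ι] [NormedAddCommGroup F] [InnerProductSpace ℝ F]
  [CompleteSpace F] {T : F →L[ℝ] F}

theorem hasGradientAt_sum_norm_sub_sq_add_inner (hT : (T : F →ₗ[ℝ] F).IsSymmetric) (b : ι → F)
    (c ν : ℝ) (x : F) :
    HasGradientAt (fun y => c / 2 * ∑ i, ‖y - b i‖ ^ 2 + ν / 2 * ⟪T y, y⟫)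
      (c • ∑ i, (x - b i) + ν • T x) x := by
  rw [hasGradientAt_iff_hasFDerivAt]
  have hfit := HasFDerivAt.fun_sum (u := Finset.univ) fun i _ =>
    ((hasFDerivAt_id (𝕜 := ℝ) x).sub_const (b i)).norm_sq
  have hform : HasFDerivAt (fun y => ⟪T y, y⟫) (2 • innerSL ℝ (T x)) x :=
    (hT.hasStrictFDerivAt_reApplyInnerSelf x).hasFDerivAt
  refine ((hfit.const_mul (c / 2)).add (hform.const_mul (ν / 2))).congr_fderiv ?_
  ext y
  simp [← Finset.mul_sum]
  ring

theorem norm_gradient_sub_le_of_eq_sum_norm_sub_sq_add_inner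
    (hT : (T : F →ₗ[ℝ] F).IsSymmetric) (b : ι → F) {c ν : ℝ} (hc : 0 ≤ c) (hν : 0 ≤ ν)
    {g : F → ℝ} (hg : ∀ x, g x = c / 2 * ∑ i, ‖x - b i‖ ^ 2 + ν / 2 * ⟪T x, x⟫) (x y : F) :
    ‖gradient g y - gradient g x‖ ≤ (Fintype.card ι * c + ν * ‖T‖) * ‖y - x‖ := by
  have hgrad : gradient g = fun x => c • ∑ i, (x - b i) + ν • T x :=
    funext hg ▸ gradient_eq (hasGradientAt_sum_norm_sub_sq_add_inner hT b c ν)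
  calc ‖gradient g y - gradient g x‖
      = ‖(Fintype.card ι * c) • (y - x) + ν • T (y - x)‖ := by
        congr 1
        simp only [hgrad, Finset.sum_sub_distrib, Finset.sum_const, Finset.card_univ, map_sub,
          ← Nat.cast_smul_eq_nsmul ℝ]
        module
    _ ≤ (Fintype.card ι * c) * ‖y - x‖ + ν * ‖T (y - x)‖ := by
        refine (norm_add_le _ _).trans_eq ?_
        rw [norm_smul_of_nonneg (by positivity), norm_smul_of_nonneg hν]
    _ ≤ (Fintype.card ι * c) * ‖y - x‖ + ν * (‖T‖ * ‖y - x‖) := by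
        gcongr; exact T.le_opNorm _
    _ = (Fintype.card ι * c + ν * ‖T‖) * ‖y - x‖ := by ring

end QuadraticObjective

/-- The Laplacian of the complete graph on `κ`, with unit weights, acting on tuples of vectors of
`E` (the rows of a matrix) in the Frobenius norm. Its quadratic form
sums `‖X s - X t‖ ^ 2` over unordered pairs, and it is not normalized by the degree `|κ| - 1`. -/
def completeLaplacian (κ E : Type*) [Fintype κ] [NormedAddCommGroup E] [NormedSpace ℝ E] :
    PiLp 2 (fun _ : κ => E) →L[ℝ] PiLp 2 (fun _ : κ => E) :=
  let row (s : κ) : PiLp 2 (fun _ : κ => E) →L[ℝ] E := PiLp.proj 2 _ s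
  (PiLp.continuousLinearEquiv 2 ℝ fun _ : κ => E).symm.toContinuousLinearMap ∘L
    ContinuousLinearMap.pi fun s => ∑ t, (row s - row t)

namespace completeLaplacian

section NormedSpace

variable {κ E : Type*} [Fintype κ] [NormedAddCommGroup E] [NormedSpace ℝ E]

theorem apply_apply (X : PiLp 2 (fun _ : κ => E)) (s : κ) :
    completeLaplacian κ E X s = ∑ t, (X s - X t) := by
  simp [completeLaplacian]

theorem comp_self :
    completeLaplacian κ E ∘L completeLaplacian κ E =
      (Fintype.card κ : ℝ) • completeLaplacian κ E := by
  ext X s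
  have hsum : ∑ t, completeLaplacian κ E X t = 0 := by
    simp [apply_apply, Finset.sum_sub_distrib, ← Finset.smul_sum]
  simp [apply_apply (completeLaplacian κ E X), hsum, Nat.cast_smul_eq_nsmul]

end NormedSpace

variable {κ E : Type*} [Fintype κ] [NormedAddCommGroup E] [InnerProductSpace ℝ E]

theorem two_mul_inner (X Y : PiLp 2 (fun _ : κ => E)) :
    2 * ⟪completeLaplacian κ E X, Y⟫ = ∑ s, ∑ t, ⟪X s - X t, Y s - Y t⟫ := by
  have hleft : ⟪completeLaplacian κ E X, Y⟫ = ∑ s, ∑ t, ⟪X s - X t, Y s⟫ := by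
    simp only [PiLp.inner_apply, apply_apply, sum_inner]
  have hswap : ∑ s, ∑ t, ⟪X s - X t, Y t⟫ = -∑ s, ∑ t, ⟪X s - X t, Y s⟫ := by
    rw [Finset.sum_comm]
    simp only [← Finset.sum_neg_distrib, ← inner_neg_left, neg_sub]
  simp only [inner_sub_right, Finset.sum_sub_distrib, hswap, hleft]
  ring

theorem isSymmetric : (completeLaplacian κ E).toLinearMap.IsSymmetric := by
  intro X Y
  refine mul_left_cancel₀ (two_ne_zero (α := ℝ)) ?_
  change 2 * ⟪completeLaplacian κ E X, Y⟫ = 2 * ⟪X, completeLaplacian κ E Y⟫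
  rw [two_mul_inner, real_inner_comm (completeLaplacian κ E Y), two_mul_inner]
  simp only [real_inner_comm]

theorem norm_le : ‖completeLaplacian κ E‖ ≤ Fintype.card κ :=
  norm_le_of_isSymmetric_of_comp_self_eq_smul isSymmetric (Nat.cast_nonneg _) comp_self

theorem inner_self [LinearOrder κ] (X : PiLp 2 (fun _ : κ => E)) :
    ⟪completeLaplacian κ E X, X⟫ = ∑ s, ∑ t, if s < t then ‖X s - X t‖ ^ 2 else 0 := by
  refine mul_left_cancel₀ (two_ne_zero (α := ℝ)) ?_
  rw [two_mul_inner]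
  simp only [real_inner_self_eq_norm_sq]
  rw [sum_sum_eq_two_nsmul_sum_sum_lt (by simp) fun s t => by rw [norm_sub_rev], nsmul_eq_mul,
    Nat.cast_ofNat]

end completeLaplacian

theorem g_mu_gradient_lipschitz_general {ι κ E : Type*} [Fintype ι] [Fintype κ] [LinearOrder κ]
    [NormedAddCommGroup E] [InnerProductSpace ℝ E] [CompleteSpace E] (a : ι → E) {lam μ : ℝ}
    (hlam : 0 ≤ lam) (hμ : 0 < μ) {g : PiLp 2 (fun _ : κ => E) → ℝ}
    (hg : ∀ X, g X = (1 / (2 * μ)) * ∑ i, ∑ ℓ, ‖X ℓ - a i‖ ^ 2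
      + lam * Fintype.card ι / 2 * ∑ s, ∑ t, (if s < t then ‖X s - X t‖ ^ 2 else 0))
    (X X' : PiLp 2 (fun _ : κ => E)) :
    ‖gradient g X' - gradient g X‖ ≤
      (Fintype.card ι / μ + lam * Fintype.card ι * Fintype.card κ) * ‖X' - X‖ := by
  let b (i : ι) : PiLp 2 (fun _ : κ => E) := WithLp.toLp 2 fun _ => a i
  have hquad (X) : g X = μ⁻¹ / 2 * ∑ i, ‖X - b i‖ ^ 2
      + lam * Fintype.card ι / 2 * ⟪completeLaplacian κ E X, X⟫ := by
    simp only [hg, completeLaplacian.inner_self, PiLp.norm_sq_eq_of_L2, PiLp.sub_apply, b]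
    ring
  refine (norm_gradient_sub_le_of_eq_sum_norm_sub_sq_add_inner completeLaplacian.isSymmetric b
    (by positivity) (by positivity) hquad X X').trans ?_
  rw [div_eq_mul_inv]
  gcongr
  exact completeLaplacian.norm_le

/-- The gradient of `g_μ` is Lipschitz continuous with constant
`n/μ + λnk` with respect to the Frobenius norm. -/
theorem g_mu_gradient_lipschitz
    (d n k : ℕ) (hn : 0 < n) (hk : 0 < k)
    (a : Fin n → EuclideanSpace ℝ (Fin d))
    (lam μ : ℝ) (hlam : 0 < lam) (hμ : 0 < μ)
    (g : PiLp 2 (fun _ : Fin k => EuclideanSpace ℝ (Fin d)) → ℝ)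
    (hg : ∀ X : PiLp 2 (fun _ : Fin k => EuclideanSpace ℝ (Fin d)),
      g X = (1 / (2 * μ)) * ∑ i : Fin n, ∑ ℓ : Fin k, ‖X ℓ - a i‖ ^ 2
        + lam * n / 2 * ∑ s : Fin k, ∑ t : Fin k, (if s < t then ‖X s - X t‖ ^ 2 else 0))
    (X X' : PiLp 2 (fun _ : Fin k => EuclideanSpace ℝ (Fin d))) :
    ‖gradient g X' - gradient g X‖ ≤ (n / μ + lam * n * k) * ‖X' - X‖ := by
  simpa only [Fintype.card_fin] using
    g_mu_gradient_lipschitz_general a hlam.le hμ (by simpa only [Fintype.card_fin] using hg) X X'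
end
end

section
/- The function h_μ : ℝ^{k×d} → ℝ is convex. -/
open scoped BigOperators RealInnerProductSpace

noncomputable section

/-! The distance to a convex set is convex and nonnegative, hence so is its square, and `ρ_μ` is a
supremum of affine functions, finite because completing the square gives
`⟪z, y⟫ - μ / 2 * ‖y‖ ^ 2 ≤ ‖z‖ ^ 2 / (2 * μ)`. Everything else in `h_μ` preserves convexity. -/

section ConvexOn

variable {𝕜 E β ι : Type*} [Semiring 𝕜] [PartialOrder 𝕜] [AddCommMonoid E] [SMul 𝕜 E] {s : Set E}

theorem convexOn_finsetSum [AddCommMonoid β] [PartialOrder β] [IsOrderedAddMonoid β] [Module 𝕜 β]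
    {t : Finset ι} {f : ι → E → β} (hs : Convex 𝕜 s) (hf : ∀ i ∈ t, ConvexOn 𝕜 s (f i)) :
    ConvexOn 𝕜 s fun x => ∑ i ∈ t, f i x := by
  rw [← Finset.sum_fn]
  exact Finset.sum_induction f (ConvexOn 𝕜 s) (fun _ _ => ConvexOn.add) (convexOn_const 0 hs) hf

theorem convexOn_ciSup [ConditionallyCompleteLattice β] [AddCommMonoid β] [IsOrderedAddMonoid β]
    [Module 𝕜 β] [PosSMulMono 𝕜 β] [Nonempty ι] {f : ι → E → β}
    (hf : ∀ i, ConvexOn 𝕜 s (f i)) (hbdd : ∀ x ∈ s, BddAbove (Set.range fun i => f i x)) :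
    ConvexOn 𝕜 s fun x => ⨆ i, f i x := by
  refine ⟨(hf (Classical.arbitrary ι)).1, fun x hx y hy b c hb hc hbc => ciSup_le fun i => ?_⟩
  calc
    f i (b • x + c • y) ≤ b • f i x + c • f i y := (hf i).2 hx hy hb hc hbc
    _ ≤ b • (⨆ j, f j x) + c • ⨆ j, f j y := by
      gcongr
      · exact le_ciSup (hbdd x hx) i
      · exact le_ciSup (hbdd y hy) i

end ConvexOn

section InfDist

variable {E : Type*} [SeminormedAddCommGroup E] [NormedSpace ℝ E] {P : Set E}

theorem convexOn_univ_infDist (hP : Convex ℝ P) (hne : P.Nonempty) :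
    ConvexOn ℝ Set.univ fun x => Metric.infDist x P := by
  refine ⟨convex_univ, fun x _ y _ b c hb hc hbc => le_of_forall_pos_le_add fun ε hε => ?_⟩
  obtain ⟨u, hu, hxu⟩ := (Metric.infDist_lt_iff hne).1 (lt_add_of_pos_right (Metric.infDist x P) hε)
  obtain ⟨v, hv, hyv⟩ := (Metric.infDist_lt_iff hne).1 (lt_add_of_pos_right (Metric.infDist y P) hε)
  calc
    Metric.infDist (b • x + c • y) P ≤ dist (b • x + c • y) (b • u + c • v) :=
      Metric.infDist_le_dist_of_mem (hP hu hv hb hc hbc)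
    _ ≤ dist (b • x) (b • u) + dist (c • y) (c • v) := dist_add_add_le _ _ _ _
    _ = b * dist x u + c * dist y v := by
      rw [dist_smul₀, dist_smul₀, Real.norm_of_nonneg hb, Real.norm_of_nonneg hc]
    _ ≤ b * (Metric.infDist x P + ε) + c * (Metric.infDist y P + ε) := by gcongr
    _ = b • Metric.infDist x P + c • Metric.infDist y P + ε := by
      simp only [smul_eq_mul]
      linear_combination ε * hbc

theorem convexOn_univ_infDist_smul_sq (hP : Convex ℝ P) (hne : P.Nonempty) (r : ℝ) :
    ConvexOn ℝ Set.univ fun x => Metric.infDist (r • x) P ^ 2 := by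
  have hscaled : ConvexOn ℝ Set.univ fun x => Metric.infDist (r • x) P :=
    (convexOn_univ_infDist hP hne).comp_linearMap (LinearMap.lsmul ℝ E r)
  exact hscaled.pow (fun _ _ => Metric.infDist_nonneg) 2

end InfDist

section SmoothedSupport

variable {E : Type*} [SeminormedAddCommGroup E] [InnerProductSpace ℝ E] {P : Set E} {μ : ℝ}

/-- The one-sided polar set `F°` of `F`; Mathlib's `LinearMap.polar` is the absolute polar. -/
def oneSidedPolar (F : Set E) : Set E := {v | ∀ x ∈ F, ⟪v, x⟫ ≤ 1}

theorem convex_oneSidedPolar (F : Set E) : Convex ℝ (oneSidedPolar F) := by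
  simp only [oneSidedPolar, Set.ofPred_forall]
  exact convex_iInter₂ fun x _ => convex_halfSpace_le ((innerₗ E).flip x).isLinear 1

theorem zero_mem_oneSidedPolar (F : Set E) : (0 : E) ∈ oneSidedPolar F := fun x _ => by
  simp only [inner_zero_left, zero_le_one]

/-- Nesterov's smoothing of the support function of `P`, which is the `ρ_μ` of the paper when `P`
is the polar set `F°`. The supremum runs over the subtype because `⨆ y ∈ P` in `ℝ` would also take
the value `0` at every `y ∉ P`. -/
def smoothedSupport (μ : ℝ) (P : Set E) (z : E) : ℝ :=
  ⨆ y : P, (⟪z, (y : E)⟫ - μ / 2 * ‖(y : E)‖ ^ 2)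

theorem inner_sub_mul_norm_sq_le (hμ : 0 < μ) (z y : E) :
    ⟪z, y⟫ - μ / 2 * ‖y‖ ^ 2 ≤ ‖z‖ ^ 2 / (2 * μ) := by
  have complete_square : ‖z - μ • y‖ ^ 2 = ‖z‖ ^ 2 - 2 * μ * (⟪z, y⟫ - μ / 2 * ‖y‖ ^ 2) := by
    rw [norm_sub_sq_real, real_inner_smul_right, norm_smul, Real.norm_of_nonneg hμ.le]
    ring
  rw [le_div_iff₀' (by positivity)]
  linarith [sq_nonneg ‖z - μ • y‖]

theorem bddAbove_range_inner_sub_mul_norm_sq (hμ : 0 < μ) (P : Set E) (z : E) :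
    BddAbove (Set.range fun y : P => ⟪z, (y : E)⟫ - μ / 2 * ‖(y : E)‖ ^ 2) :=
  ⟨‖z‖ ^ 2 / (2 * μ), Set.forall_mem_range.2 fun y => inner_sub_mul_norm_sq_le hμ z y⟩

theorem smoothedSupport_nonneg (hμ : 0 < μ) (h0 : (0 : E) ∈ P) (z : E) :
    0 ≤ smoothedSupport μ P z :=
  le_ciSup_of_le (bddAbove_range_inner_sub_mul_norm_sq hμ P z) ⟨0, h0⟩ (by simp)

theorem smoothedSupport_eq_biSup (hμ : 0 < μ) (h0 : (0 : E) ∈ P) (z : E) :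
    smoothedSupport μ P z = ⨆ y ∈ P, (⟪z, y⟫ - μ / 2 * ‖y‖ ^ 2) :=
  ciSup_subtype_fun (f := fun y => ⟪z, y⟫ - μ / 2 * ‖y‖ ^ 2)
    (bddAbove_range_inner_sub_mul_norm_sq hμ P z)
    (Real.sSup_empty.trans_le (smoothedSupport_nonneg hμ h0 z))

theorem convexOn_univ_smoothedSupport (hμ : 0 < μ) (hne : P.Nonempty) :
    ConvexOn ℝ Set.univ (smoothedSupport μ P) :=
  have := hne.to_subtype
  convexOn_ciSup
    (fun y => (((innerₗ E).flip y).convexOn convex_univ).sub (concaveOn_const _ convex_univ))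
    fun z _ => bddAbove_range_inner_sub_mul_norm_sq hμ P z

end SmoothedSupport

theorem h_mu_convex_general {ι κ E : Type*} [Fintype ι] [Fintype κ] [DecidableEq κ] [Nonempty κ]
    [SeminormedAddCommGroup E] [InnerProductSpace ℝ E] {p : ENNReal} {P : Set E}
    (hP : Convex ℝ P) (hne : P.Nonempty) {μ : ℝ} (hμ : 0 < μ) (a : ι → E) :
    ConvexOn ℝ Set.univ fun X : PiLp p fun _ : κ => E =>
      μ / 2 * ∑ i, ∑ ℓ, Metric.infDist (μ⁻¹ • (X ℓ - a i)) P ^ 2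
        + ∑ i, ⨆ r, ∑ ℓ ∈ Finset.univ.erase r, smoothedSupport μ P (X ℓ - a i) := by
  let coordSub (ℓ : κ) (b : E) : PiLp p (fun _ : κ => E) →ᵃ[ℝ] E :=
    (PiLp.projₗ p (fun _ => E) ℓ).toAffineMap - AffineMap.const ℝ _ b
  have hdist (i : ι) (ℓ : κ) :=
    (convexOn_univ_infDist_smul_sq hP hne μ⁻¹).comp_affineMap (coordSub ℓ (a i))
  have hsupport (i : ι) (ℓ : κ) :=
    (convexOn_univ_smoothedSupport hμ hne).comp_affineMap (coordSub ℓ (a i))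
  refine .add (.smul (by positivity : 0 ≤ μ / 2) ?_) ?_
  · exact convexOn_finsetSum convex_univ fun i _ =>
      convexOn_finsetSum convex_univ fun ℓ _ => hdist i ℓ
  · exact convexOn_finsetSum convex_univ fun i _ =>
      convexOn_ciSup (fun r => convexOn_finsetSum convex_univ fun ℓ _ => hsupport i ℓ)
        fun X _ => (Set.finite_range _).bddAbove

/-- The function `h_μ` (the concave part of the smoothed DC decomposition)
is convex on `ℝ^{k×d}`. -/
theorem h_mu_convex
    (d n k : ℕ) (hn : 0 < n) (hk : 0 < k)
    (F : Set (EuclideanSpace ℝ (Fin d)))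
    (hFcomp : IsCompact F) (hFconv : Convex ℝ F)
    (hF0 : (0 : EuclideanSpace ℝ (Fin d)) ∈ interior F)
    (polar : Set (EuclideanSpace ℝ (Fin d)))
    (hpolar : polar = {v : EuclideanSpace ℝ (Fin d) | ∀ x ∈ F, ⟪v, x⟫ ≤ 1})
    (a : Fin n → EuclideanSpace ℝ (Fin d))
    (μ : ℝ) (hμ : 0 < μ)
    (rhoMu : EuclideanSpace ℝ (Fin d) → ℝ)
    (hrhoMu : ∀ z : EuclideanSpace ℝ (Fin d),
      rhoMu z = ⨆ y ∈ polar, (⟪z, y⟫ - μ / 2 * ‖y‖ ^ 2))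
    (h : PiLp 2 (fun _ : Fin k => EuclideanSpace ℝ (Fin d)) → ℝ)
    (hh : ∀ X : PiLp 2 (fun _ : Fin k => EuclideanSpace ℝ (Fin d)),
      h X = μ / 2 * ∑ i : Fin n, ∑ ℓ : Fin k,
          (Metric.infDist (μ⁻¹ • (X ℓ - a i)) polar) ^ 2
        + ∑ i : Fin n, ⨆ r : Fin k, ∑ ℓ ∈ Finset.univ.erase r, rhoMu (X ℓ - a i)) :
    ConvexOn ℝ Set.univ h := by
  obtain rfl : polar = oneSidedPolar F := hpolar
  have : Nonempty (Fin k) := Fin.pos_iff_nonempty.1 hk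
  have h0 := zero_mem_oneSidedPolar F
  simpa only [funext hh, hrhoMu, smoothedSupport_eq_biSup hμ h0] using
    h_mu_convex_general (convex_oneSidedPolar F) ⟨0, h0⟩ hμ a
end
end
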